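/- For every f ∈ A_LP one has C₁* ≤ Z̃(f), where Z̃(f) := r(f) + (2/r(f)) ∫₀^{r(f)} f(x) x dx + 3 ∫_{r(f)}^{(3/2)r(f)} f(x) dx − (2/r(f)) ∫_{r(f)}^{(3/2)r(f)} f(x) x dx. -/

import Mathlib

open MeasureTheory Filter
open scoped Classical

noncomputable section

/-- The Fourier transform `ĝ(α) = ∫ g(x) e^{-2πiαx} dx` of a real-valued function. -/
def fourierT (g : ℝ → ℝ) (α : ℝ) : ℂ :=
  ∫ x : ℝ, (g x : ℂ) * Complex.exp (-(2 * Real.pi * α * x : ℝ) * Complex.I)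

/-- The class `A₁` of continuous, even, non-negative functions `g ∈ L¹(ℝ)`
with `ĝ(α) ≤ 0` for `|α| ≥ 1` (such `ĝ` is real-valued since `g` is even and real). -/
def memA1 (g : ℝ → ℝ) : Prop :=
  Continuous g ∧ (∀ x, g (-x) = g x) ∧ (∀ x, 0 ≤ g x) ∧ MeasureTheory.Integrable g ∧
    ∀ α : ℝ, 1 ≤ |α| → (fourierT g α).re ≤ 0

/-- The functional `ρ₁(g) = ĝ(0) + ∫_{-1}^{1} ĝ(α)|α| dα`. -/
def rho1 (g : ℝ → ℝ) : ℝ :=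
  (fourierT g 0).re + ∫ α in (-1 : ℝ)..1, (fourierT g α).re * |α|

/-- The constant `C₁ = inf ρ₁(g)/g(0)` over nonzero `g ∈ A₁` with `g(0) > 0`. -/
def C1 : ℝ :=
  sInf {c : ℝ | ∃ g : ℝ → ℝ, memA1 g ∧ g ≠ 0 ∧ 0 < g 0 ∧ c = rho1 g / g 0}

/-- The functional `ρ₁*(g) = ĝ(0) + ∫_{-1}^{1} ĝ(α)|α| dα + ∫_{1≤|α|≤3/2} ĝ(α)(3/2-|α|) dα`. -/
def rho1star (g : ℝ → ℝ) : ℝ :=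
  (fourierT g 0).re + (∫ α in (-1 : ℝ)..1, (fourierT g α).re * |α|) +
    ∫ α in {α : ℝ | 1 ≤ |α| ∧ |α| ≤ 3 / 2}, (fourierT g α).re * (3 / 2 - |α|)

/-- The constant `C₁* = inf ρ₁*(g)/g(0)` over nonzero `g ∈ A₁` with `g(0) > 0`. -/
def C1star : ℝ :=
  sInf {c : ℝ | ∃ g : ℝ → ℝ, memA1 g ∧ g ≠ 0 ∧ 0 < g 0 ∧ c = rho1star g / g 0}

/-- The Cohn–Elkies linear programming class `A_LP`: even continuous `f ∈ L¹(ℝ)` with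
`f(0) = f̂(0) = 1`, `f̂ ≥ 0`, and `f` eventually non-positive. -/
def memALP (f : ℝ → ℝ) : Prop :=
  Continuous f ∧ (∀ x, f (-x) = f x) ∧ MeasureTheory.Integrable f ∧
    f 0 = 1 ∧ fourierT f 0 = 1 ∧ (∀ α : ℝ, 0 ≤ (fourierT f α).re) ∧
    ∃ r : ℝ, ∀ x : ℝ, r ≤ |x| → f x ≤ 0

/-- The last sign change `r(f) = inf{r > 0 : f(x) ≤ 0 for all |x| ≥ r}`. -/
def lastSign (f : ℝ → ℝ) : ℝ :=
  sInf {r : ℝ | 0 < r ∧ ∀ x : ℝ, r ≤ |x| → f x ≤ 0}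

/-- The functional `Z̃(f) = r(f) + (2/r(f)) ∫₀^{r(f)} f(x) x dx
+ 3 ∫_{r(f)}^{(3/2)r(f)} f(x) dx − (2/r(f)) ∫_{r(f)}^{(3/2)r(f)} f(x) x dx`. -/
def Ztilde (f : ℝ → ℝ) : ℝ :=
  lastSign f + (2 / lastSign f) * (∫ x in (0 : ℝ)..(lastSign f), f x * x) +
    3 * (∫ x in (lastSign f)..(3 / 2 * lastSign f), f x) -
    (2 / lastSign f) * ∫ x in (lastSign f)..(3 / 2 * lastSign f), f x * x

open scoped FourierTransform Topology

lemma kernel_ineq (t : ℝ) (ht : 0 < t) :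
    0 ≤ 4 * t ^ 2 + 4 * t * (Real.sin t * Real.cos t) + 8 * Real.cos t ^ 2 - 6
      - 8 * Real.cos t ^ 3 + 6 * Real.cos t := by
  have hsc := Real.sin_sq_add_cos_sq t
  have hs1 := Real.sin_le_one t
  have hs2 := Real.neg_one_le_sin t
  have hc1 := Real.cos_le_one t
  have hc2 := Real.neg_one_le_cos t
  have hst := Real.sin_lt ht
  have hpi := Real.pi_gt_d2
  have hpi' := Real.pi_lt_d2
  generalize hs : Real.sin t = s at *
  generalize hc : Real.cos t = c at *
  have hp : -(1/2) ≤ s * c := by nlinarith [sq_nonneg (s + c)]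
  rcases le_total 2 t with h2 | h2
  · have : 0 ≤ t * (s * c + 1/2) := mul_nonneg ht.le (by linarith)
    have h3 : -7 ≤ 8 * c ^ 2 - 6 - 8 * c ^ 3 + 6 * c := by
      nlinarith [mul_nonneg (sub_nonneg.2 hc1) (sq_nonneg (c + 3/10)), sq_nonneg (c + 3/10)]
    nlinarith
  · have hs0 : 0 ≤ s := by
      rw [← hs]; exact Real.sin_nonneg_of_nonneg_of_le_pi ht.le (by linarith)
    rcases le_total (1/5) c with h5 | h5
    · have a1 : s ^ 2 ≤ t ^ 2 := by nlinarith
      have a2 : s ^ 2 * c ≤ t * (s * c) := by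
        have : 0 ≤ (t - s) * (s * c) := mul_nonneg (by linarith) (mul_nonneg hs0 (by linarith))
        nlinarith
      have a3 : s ^ 2 = 1 - c ^ 2 := by linarith
      have a4 : 0 ≤ (1 - c) * (12 * c ^ 2 + 8 * c - 2) := mul_nonneg (by linarith) (by nlinarith)
      rw [a3] at a1 a2
      nlinarith
    · rcases le_total 0 c with h0 | h0
      · have a1 : 1.3 ≤ t := by
          by_contra hlt
          push Not at hlt
          have := Real.one_sub_sq_div_two_le_cos (x := t)
          have h1 : Real.cos 1.3 < Real.cos t := 
            Real.cos_lt_cos_of_nonneg_of_le_pi ht.le (by linarith) hlt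
          have h2 : (1:ℝ)/5 < Real.cos 1.3 := by
            have h3 : Real.cos 1.3 = 2 * Real.cos 0.65 ^ 2 - 1 := by
              rw [← Real.cos_two_mul]; norm_num
            have h4 : 1 - (0.65:ℝ) ^ 2 / 2 ≤ Real.cos 0.65 := Real.one_sub_sq_div_two_le_cos
            rw [h3]; nlinarith
          linarith
        have a2 : 0 ≤ t * (s * c) := by positivity
        nlinarith [pow_le_pow_left₀ h0 h5 3]
      · have a1 : Real.pi / 2 ≤ t := by
          by_contra hlt
          push Not at hlt
          have := Real.cos_pos_of_mem_Ioo ⟨by linarith, hlt⟩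
          linarith
        have a1' : 1.57 ≤ t := by linarith
        have a2 : t * c ≤ t * (s * c) := by nlinarith [mul_nonneg ht.le (mul_nonneg (sub_nonneg.2 hs1) (neg_nonneg.2 h0))]
        have a3 : 0 ≤ (t - 1.57) * (t + 1.57 + c) := mul_nonneg (by linarith) (by linarith)
        nlinarith [mul_nonneg (show 0 ≤ 1 + c by linarith) (sq_nonneg (c + 45/100)), sq_nonneg (c + 45/100)]

lemma int1 (w : ℝ) (hw : w ≠ 0) :
    ∫ a in (0:ℝ)..1, Real.cos (w * a) * a = Real.sin w / w + (Real.cos w - 1) / w ^ 2 := by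
  have : ∀ a ∈ Set.uIcc (0:ℝ) 1, HasDerivAt
      (fun a => a * Real.sin (w * a) / w + Real.cos (w * a) / w ^ 2) (Real.cos (w * a) * a) a := by
    intro a _
    have h1 : HasDerivAt (fun a => w * a) w a := by simpa using (hasDerivAt_id a).const_mul w
    have h2 := (((hasDerivAt_id a).mul h1.sin).div_const w).add (h1.cos.div_const (w ^ 2))
    convert! h2 using 1
    simp; field_simp; ring
  rw [intervalIntegral.integral_eq_sub_of_hasDerivAt this
    (Continuous.intervalIntegrable (by fun_prop) _ _)]
  simp; ring

lemma int2 (w : ℝ) (hw : w ≠ 0) :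
    ∫ a in (1:ℝ)..(3/2), Real.cos (w * a) * (3/2 - a) =
      - (1/2) * Real.sin w / w + (Real.cos w - Real.cos (w * (3/2))) / w ^ 2 := by
  have : ∀ a ∈ Set.uIcc (1:ℝ) (3/2), HasDerivAt
      (fun a => (3/2 - a) * Real.sin (w * a) / w - Real.cos (w * a) / w ^ 2)
      (Real.cos (w * a) * (3/2 - a)) a := by
    intro a _
    have h1 : HasDerivAt (fun a => w * a) w a := by simpa using (hasDerivAt_id a).const_mul w
    have h2 := ((((hasDerivAt_id a).const_sub (3/2)).mul h1.sin).div_const w).sub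
      (h1.cos.div_const (w ^ 2))
    convert! h2 using 1
    simp; field_simp; ring
  rw [intervalIntegral.integral_eq_sub_of_hasDerivAt this
    (Continuous.intervalIntegrable (by fun_prop) _ _)]
  simp; ring

lemma kernel_pos_aux (w : ℝ) (hw : 0 < w) :
    0 ≤ 1 + 2 * (∫ a in (0:ℝ)..1, Real.cos (w * a) * a) +
      2 * ∫ a in (1:ℝ)..(3/2), Real.cos (w * a) * (3/2 - a) := by
  rw [int1 w hw.ne', int2 w hw.ne']
  have h := kernel_ineq (w / 2) (by linarith)
  have e1 : Real.cos w = 2 * Real.cos (w/2) ^ 2 - 1 := by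
    rw [← Real.cos_two_mul]; congr 1; ring
  have e2 : Real.sin w = 2 * Real.sin (w/2) * Real.cos (w/2) := by
    rw [← Real.sin_two_mul]; congr 1; ring
  have e3 : Real.cos (w * (3/2)) = 4 * Real.cos (w/2) ^ 3 - 3 * Real.cos (w/2) := by
    rw [← Real.cos_three_mul]; congr 1; ring
  rw [e1, e2, e3]
  have : 0 < w ^ 2 := by positivity
  refine (div_nonneg h this.le).trans_eq ?_
  field_simp
  ring

lemma kernel_pos (w : ℝ) :
    0 ≤ 1 + 2 * (∫ a in (0:ℝ)..1, Real.cos (w * a) * a) +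
      2 * ∫ a in (1:ℝ)..(3/2), Real.cos (w * a) * (3/2 - a) := by
  rcases lt_trichotomy w 0 with h | h | h
  · simpa using kernel_pos_aux (-w) (by linarith)
  · subst h
    have h1 : 0 ≤ ∫ a in (0:ℝ)..1, Real.cos (0 * a) * a :=
      intervalIntegral.integral_nonneg (by norm_num) (fun a ha => by simpa using ha.1)
    have h2 : 0 ≤ ∫ a in (1:ℝ)..(3/2), Real.cos (0 * a) * (3/2 - a) :=
      intervalIntegral.integral_nonneg (by norm_num) (fun a ha => by
        simp only [zero_mul, Real.cos_zero, one_mul]; linarith [ha.2])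
    linarith
  · exact kernel_pos_aux w h

lemma fourierT_eq (g : ℝ → ℝ) : fourierT g = 𝓕 (fun x => (g x : ℂ)) := by
  ext α
  rw [Real.fourier_real_eq_integral_exp_smul, fourierT]
  congr 1 with x
  rw [smul_eq_mul, mul_comm]
  congr 3
  push_cast; ring

lemma fourierT_cont (g : ℝ → ℝ) (hg : Integrable g) : Continuous (fourierT g) := by
  rw [fourierT_eq]
  exact VectorFourier.fourierIntegral_continuous Real.continuous_fourierChar
    (innerSL ℝ).continuous₂ hg.ofReal

lemma fourierT_re (g : ℝ → ℝ) (hg : Integrable g) (α : ℝ) :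
    (fourierT g α).re = ∫ x, g x * Real.cos (2 * Real.pi * α * x) := by
  have hi : Integrable (fun x : ℝ => (g x : ℂ) * Complex.exp (-(2 * Real.pi * α * x : ℝ) * Complex.I)) := by
    refine hg.ofReal.mul_bdd (c := 1) (Continuous.aestronglyMeasurable (by fun_prop)) ?_
    filter_upwards with x
    rw [← Complex.ofReal_neg, Complex.norm_exp_ofReal_mul_I]
  have := integral_re hi
  simp only [RCLike.re_eq_complex_re] at this
  rw [fourierT, ← this]
  congr 1 with x
  rw [← Complex.ofReal_neg, Complex.re_ofReal_mul, Complex.exp_ofReal_mul_I_re, Real.cos_neg]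

lemma fourierT_even (g : ℝ → ℝ) (hg : ∀ x, g (-x) = g x) (α : ℝ) :
    fourierT g (-α) = fourierT g α := by
  rw [fourierT, fourierT, ← integral_neg_eq_self]
  congr 1 with x
  rw [hg]; congr 3; push_cast; ring

lemma fourierT_real (g : ℝ → ℝ) (hg : ∀ x, g (-x) = g x) (α : ℝ) :
    ((fourierT g α).re : ℂ) = fourierT g α := by
  rw [← Complex.conj_eq_iff_re]
  conv_rhs => rw [← fourierT_even g hg]
  rw [fourierT, fourierT, ← integral_conj]
  congr 1 with x
  rw [map_mul, ← Complex.exp_conj]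
  simp [-mul_eq_mul_left_iff, map_ofNat]

lemma weights (φ : ℝ → ℝ) (hc : Continuous φ) (he : ∀ x, φ (-x) = φ x) :
    (∫ α in (-1 : ℝ)..1, φ α * |α|) +
      (∫ α in {α : ℝ | 1 ≤ |α| ∧ |α| ≤ 3 / 2}, φ α * (3 / 2 - |α|)) =
    2 * (∫ a in (0:ℝ)..1, φ a * a) + 2 * ∫ a in (1:ℝ)..(3/2), φ a * (3/2 - a) := by
  have h1 : (∫ α in (-1 : ℝ)..1, φ α * |α|) = 2 * ∫ a in (0:ℝ)..1, φ a * a := by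
    rw [← intervalIntegral.integral_add_adjacent_intervals (b := 0)
      (Continuous.intervalIntegrable (by fun_prop) _ _)
      (Continuous.intervalIntegrable (by fun_prop) _ _)]
    have h3 : ∫ a in (0:ℝ)..1, φ a * |a| = ∫ a in (0:ℝ)..1, φ a * a := by
      apply intervalIntegral.integral_congr
      intro a ha
      rw [Set.uIcc_of_le (by norm_num)] at ha
      simp only [abs_of_nonneg ha.1]
    have h2 : ∫ a in (-1:ℝ)..0, φ a * |a| = ∫ a in (0:ℝ)..1, φ a * |a| := by
      have := intervalIntegral.integral_comp_neg (a := (0:ℝ)) (b := 1) (fun a => φ a * |a|)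
      simpa [he] using this.symm
    rw [h2, h3]; ring
  have hS : {α : ℝ | 1 ≤ |α| ∧ |α| ≤ 3 / 2} = Set.Icc (-(3/2)) (-1) ∪ Set.Icc 1 (3/2) := by
    ext a
    simp only [Set.mem_ofPred_eq, Set.mem_union, Set.mem_Icc]
    rcases abs_cases a with ⟨h, h'⟩ | ⟨h, h'⟩ <;> rw [h]
    · constructor
      · rintro ⟨_, _⟩; right; constructor <;> linarith
      · rintro (⟨_, _⟩ | ⟨_, _⟩) <;> constructor <;> linarith
    · constructor
      · rintro ⟨_, _⟩; left; constructor <;> linarith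
      · rintro (⟨_, _⟩ | ⟨_, _⟩) <;> constructor <;> linarith
  have hcc : Continuous (fun α => φ α * (3 / 2 - |α|)) := by fun_prop
  have h2 : (∫ α in {α : ℝ | 1 ≤ |α| ∧ |α| ≤ 3 / 2}, φ α * (3 / 2 - |α|)) =
      2 * ∫ a in (1:ℝ)..(3/2), φ a * (3/2 - a) := by
    rw [hS, setIntegral_union _ measurableSet_Icc (hcc.continuousOn.integrableOn_Icc)
      (hcc.continuousOn.integrableOn_Icc), integral_Icc_eq_integral_Ioc,
      integral_Icc_eq_integral_Ioc, ← intervalIntegral.integral_of_le (by norm_num),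
      ← intervalIntegral.integral_of_le (by norm_num)]
    · have h3 : ∫ a in (1:ℝ)..(3/2), φ a * (3/2 - |a|) = ∫ a in (1:ℝ)..(3/2), φ a * (3/2 - a) := by
        apply intervalIntegral.integral_congr
        intro a ha
        rw [Set.uIcc_of_le (by norm_num)] at ha
        simp only [abs_of_nonneg (zero_le_one.trans ha.1)]
      have h2 : ∫ a in (-(3/2):ℝ)..(-1), φ a * (3/2 - |a|) =
          ∫ a in (1:ℝ)..(3/2), φ a * (3/2 - |a|) := by
        have := intervalIntegral.integral_comp_neg (a := (1:ℝ)) (b := 3/2)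
          (fun a => φ a * (3/2 - |a|))
        simpa [he] using this.symm
      rw [h2, h3]; ring
    · rw [Set.disjoint_left]
      rintro a ⟨_, h⟩ ⟨h', _⟩
      linarith
  rw [h1, h2]

lemma rho1star_eq (g : ℝ → ℝ) (hg : Integrable g) (he : ∀ x, g (-x) = g x) :
    rho1star g = (fourierT g 0).re + 2 * (∫ a in (0:ℝ)..1, (fourierT g a).re * a)
      + 2 * ∫ a in (1:ℝ)..(3/2), (fourierT g a).re * (3/2 - a) := by
  rw [rho1star, add_assoc, weights (fun a => (fourierT g a).re)
    (Complex.continuous_re.comp (fourierT_cont g hg))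
    (fun x => by rw [fourierT_even g he])]
  ring

lemma swap_int (g w : ℝ → ℝ) (hg : Integrable g) (hw : Continuous w) (a b : ℝ) (hab : a ≤ b) :
    Integrable (fun x => g x * ∫ α in a..b, Real.cos (2 * Real.pi * x * α) * w α) ∧
    ∫ α in a..b, (fourierT g α).re * w α =
      ∫ x, g x * ∫ α in a..b, Real.cos (2 * Real.pi * x * α) * w α := by
  have hwi : Integrable w (volume.restrict (Set.Ioc a b)) :=
    (hw.continuousOn.integrableOn_Icc).mono_set Set.Ioc_subset_Icc_self
  have hi : Integrable (Function.uncurry fun (x α : ℝ) =>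
      g x * (Real.cos (2 * Real.pi * x * α) * w α))
      (volume.prod (volume.restrict (Set.Ioc a b))) := by
    have h1 := (hg.mul_prod hwi).mul_bdd (c := 1)
      (g := fun p : ℝ × ℝ => Real.cos (2 * Real.pi * p.1 * p.2))
      (Continuous.aestronglyMeasurable (by fun_prop))
      (by filter_upwards with p; exact Real.abs_cos_le_one _)
    refine h1.congr ?_
    filter_upwards with p
    simp only [Function.uncurry]
    ring
  constructor
  · have := hi.integral_prod_left
    refine this.congr ?_
    filter_upwards with x
    simp only [Function.uncurry]
    rw [intervalIntegral.integral_of_le hab, ← integral_const_mul]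
  · have := integral_integral_swap hi
    simp only [intervalIntegral.integral_of_le hab, ← integral_const_mul]
    rw [this]
    congr 1 with α
    rw [fourierT_re g hg, ← integral_mul_const]
    congr 1 with x
    rw [show 2 * Real.pi * α * x = 2 * Real.pi * x * α by ring]
    ring

lemma rho1star_nonneg (g : ℝ → ℝ) (hg : memA1 g) : 0 ≤ rho1star g := by
  obtain ⟨hc, he, h0, hi, -⟩ := hg
  rw [rho1star_eq g hi he, fourierT_re g hi 0]
  obtain ⟨i1, e1⟩ := swap_int g (fun a => a) hi (by fun_prop) 0 1 (by norm_num)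
  obtain ⟨i2, e2⟩ := swap_int g (fun a => 3/2 - a) hi (by fun_prop) 1 (3/2) (by norm_num)
  rw [e1, e2, ← integral_const_mul, ← integral_const_mul]
  simp only [mul_zero, zero_mul, Real.cos_zero, mul_one]
  rw [← integral_add hi (i1.const_mul 2), ← integral_add (by exact hi.add (i1.const_mul 2)) (i2.const_mul 2)]
  apply integral_nonneg
  intro x
  have := mul_nonneg (h0 x) (kernel_pos (2 * Real.pi * x))
  simp only [Pi.zero_apply]
  linarith

lemma gauss_tendsto (F : ℝ → ℂ) (hF : Integrable F) (hc : Continuous F) :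
    Tendsto (fun c : ℝ => ∫ w : ℝ, Complex.exp (-(c : ℂ)⁻¹ * ‖w‖ ^ 2) • 𝓕 F w) atTop (𝓝 (F 0)) := by
  refine (Real.tendsto_integral_gaussian_smul' hF (v := 0) hc.continuousAt).congr' ?_
  filter_upwards [Ioi_mem_atTop 0] with c (hc : 0 < c)
  have J : Integrable (fun w : ℝ ↦ Complex.exp (-(c : ℂ)⁻¹ * ‖w‖ ^ 2
      + 2 * Real.pi * Complex.I * (inner ℝ (0:ℝ) w : ℝ))) :=
    GaussianFourier.integrable_cexp_neg_mul_sq_norm_add (by simpa) _ _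
  have K := (VectorFourier.integral_fourierIntegral_smul_eq_flip (L := innerₗ ℝ)
      Real.continuous_fourierChar continuous_inner J hF)
  have K' : ∫ w : ℝ, 𝓕 (fun w : ℝ ↦ Complex.exp (-(c : ℂ)⁻¹ * ‖w‖ ^ 2
      + 2 * Real.pi * Complex.I * (inner ℝ (0:ℝ) w : ℝ))) w • F w =
      ∫ w : ℝ, Complex.exp (-(c : ℂ)⁻¹ * ‖w‖ ^ 2) • 𝓕 F w := by
    simpa using! K
  rw [← K']
  congr with w
  rw [fourier_gaussian_innerProductSpace' (by simpa)]
  congr 1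
  congr 1
  · simp
  · congr 1
    rw [div_inv_eq_mul]
    ring

lemma integrable_hat (f : ℝ → ℝ) (hf : Integrable f) (hc : Continuous f)
    (he : ∀ x, f (-x) = f x) (h0 : ∀ α, 0 ≤ (fourierT f α).re) :
    Integrable (fun α => (fourierT f α).re) := by
  have hcont : Continuous (fun α => (fourierT f α).re) :=
    Complex.continuous_re.comp (fourierT_cont f hf)
  have T := gauss_tendsto (fun x => (f x : ℂ)) hf.ofReal (by fun_prop)
  rw [← fourierT_eq] at T
  have T2 : Tendsto (fun c : ℝ => ∫ w : ℝ, Real.exp (-c⁻¹ * w ^ 2) * (fourierT f w).re)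
      atTop (𝓝 (f 0)) := by
    have := (Complex.continuous_re.tendsto _).comp T
    simp only [Complex.ofReal_re] at this
    refine this.congr (fun c => ?_)
    simp only [Function.comp]
    rw [← Complex.ofReal_re (∫ w : ℝ, Real.exp (-c⁻¹ * w ^ 2) * (fourierT f w).re),
      ← integral_complex_ofReal]
    congr 2 with w
    rw [Complex.ofReal_mul, fourierT_real f he, smul_eq_mul, Complex.ofReal_exp]
    congr 2
    push_cast
    rw [← Complex.ofReal_pow, Real.norm_eq_abs, sq_abs]
    push_cast; rfl
  have bdd : ∀ α, ‖(fourierT f α).re‖ ≤ ∫ x, ‖f x‖ := by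
    intro α
    rw [fourierT_re f hf]
    refine (norm_integral_le_integral_norm _).trans ?_
    refine integral_mono_of_nonneg (by filter_upwards with x; positivity) hf.norm ?_
    filter_upwards with x
    rw [norm_mul]
    exact mul_le_of_le_one_right (norm_nonneg _) (Real.abs_cos_le_one _)
  have hInt : ∀ n : ℕ, Integrable (fun w : ℝ =>
      Real.exp (-((n:ℝ) + 1)⁻¹ * w ^ 2) * (fourierT f w).re) := fun n =>
    (integrable_exp_neg_mul_sq (by positivity)).mul_bdd hcont.aestronglyMeasurable
      (by filter_upwards with x; exact bdd x)
  refine integrable_of_tendsto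
    (G := fun n w => Real.exp (-((n:ℝ) + 1)⁻¹ * w ^ 2) * (fourierT f w).re) ?_
    (fun n => (hInt n).1) ?_
  · filter_upwards with w
    have h1 : Tendsto (fun n : ℕ => ((n:ℝ) + 1)⁻¹) atTop (𝓝 0) := by
      simpa using tendsto_one_div_add_atTop_nhds_zero_nat (𝕜 := ℝ)
    have h2 := ((Real.continuous_exp.tendsto _).comp ((h1.neg).mul_const (w ^ 2))).mul_const
      ((fourierT f w).re)
    simpa using h2
  · have T3 : Tendsto (fun n : ℕ => (n:ℝ) + 1) atTop atTop :=
      tendsto_atTop_add_const_right _ _ tendsto_natCast_atTop_atTop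
    have T4 := (ENNReal.continuous_ofReal.tendsto _).comp (T2.comp T3)
    have T5 : Tendsto (fun n : ℕ => ∫⁻ w : ℝ, ‖Real.exp (-((n:ℝ) + 1)⁻¹ * w ^ 2) *
        (fourierT f w).re‖ₑ) atTop (𝓝 (ENNReal.ofReal (f 0))) := by
      refine T4.congr (fun n => ?_)
      simp only [Function.comp]
      rw [← ofReal_integral_norm_eq_lintegral_enorm (hInt n)]
      congr 2 with w
      rw [Real.norm_of_nonneg (mul_nonneg (Real.exp_pos _).le (h0 w))]
    rw [T5.liminf_eq]
    exact ENNReal.ofReal_ne_top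

lemma fourierT_hat (f : ℝ → ℝ) (hf : Integrable f) (hc : Continuous f)
    (he : ∀ x, f (-x) = f x) (h0 : ∀ α, 0 ≤ (fourierT f α).re) (β : ℝ) :
    fourierT (fun α => (fourierT f α).re) β = f β := by
  have hi := integrable_hat f hf hc he h0
  have e : (fun α => ((fourierT f α).re : ℂ)) = 𝓕 (fun x => (f x : ℂ)) := by
    rw [← fourierT_eq]; ext α; exact fourierT_real f he α
  have hi' := hi.ofReal (𝕜 := ℂ)
  have e' := congrFun (Continuous.fourierInv_fourier_eq (f := fun x => (f x : ℂ)) (by fun_prop)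
    hf.ofReal (by rw [← e]; exact hi')) (-β)
  rw [fourierT_eq, e, ← neg_neg β, ← Real.fourierInv_eq_fourier_neg, e', neg_neg, he]

lemma fourierT_scale (h : ℝ → ℝ) (r : ℝ) (hr : 0 < r) (α : ℝ) :
    fourierT (fun x => h (x / r)) α = r * fourierT h (r * α) := by
  have := Measure.integral_comp_div (fun y : ℝ => (h y : ℂ) *
    Complex.exp (-(2 * Real.pi * (r * α) * y : ℝ) * Complex.I)) r
  rw [abs_of_pos hr, Complex.real_smul] at this
  rw [fourierT, fourierT, ← this]
  congr 1 with x
  congr 5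
  field_simp

lemma lastSign_pos (f : ℝ → ℝ) (hf : memALP f) : 0 < lastSign f := by
  obtain ⟨hc, he, hi, h1, h2, h3, R, hR⟩ := hf
  have : ∀ᶠ x in 𝓝 (0:ℝ), 0 < f x := hc.continuousAt.eventually (lt_mem_nhds (by rw [h1]; exact one_pos))
  obtain ⟨ε, hε, h⟩ := Metric.eventually_nhds_iff.1 this
  refine (half_pos hε).trans_le (le_csInf ⟨max R 1, by positivity, fun x hx => hR x ((le_max_left _ _).trans hx)⟩ ?_)
  rintro s ⟨hs, hs'⟩
  by_contra hlt
  push Not at hlt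
  have a := hs' s (le_abs_self s)
  have b := h (y := s) (by simp [abs_of_pos hs]; linarith)
  linarith

lemma lastSign_le (f : ℝ → ℝ) (hf : memALP f) (x : ℝ) (hx : lastSign f ≤ |x|) : f x ≤ 0 := by
  have hr := lastSign_pos f hf
  obtain ⟨hc, he, hi, h1, h2, h3, R, hR⟩ := hf
  have key : ∀ y, lastSign f < |y| → f y ≤ 0 := by
    intro y hy
    obtain ⟨s, hs, hsy⟩ := exists_lt_of_csInf_lt (s := {r : ℝ | 0 < r ∧ ∀ x : ℝ, r ≤ |x| → f x ≤ 0})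
      ⟨max R 1, by positivity, fun x hx => hR x ((le_max_left _ _).trans hx)⟩ hy
    exact hs.2 y hsy.le
  have hT : Tendsto (fun t : ℝ => f (t * x)) (𝓝[>] 1) (𝓝 (f x)) := by
    have : Continuous (fun t : ℝ => f (t * x)) := by fun_prop
    simpa using (this.tendsto 1).mono_left nhdsWithin_le_nhds
  refine le_of_tendsto hT ?_
  filter_upwards [self_mem_nhdsWithin] with t ht
  apply key
  have ht' : 1 < t := ht
  rw [abs_mul, abs_of_pos (by linarith)]
  nlinarith

/-- For every `f ∈ A_LP` one has `C₁* ≤ Z̃(f)`. -/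
theorem statement14 (f : ℝ → ℝ) (hf : memALP f) : C1star ≤ Ztilde f := by
  have hr := lastSign_pos f hf
  have hle := lastSign_le f hf
  obtain ⟨hc, he, hi, h1, h2, h3, -⟩ := hf
  have hZ : Ztilde f = lastSign f + (2 / lastSign f) * (∫ x in (0 : ℝ)..(lastSign f), f x * x) +
    3 * (∫ x in (lastSign f)..(3 / 2 * lastSign f), f x) -
    (2 / lastSign f) * ∫ x in (lastSign f)..(3 / 2 * lastSign f), f x * x := rfl
  generalize lastSign f = r at *
  let g : ℝ → ℝ := fun x => (fourierT f (x / r)).re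
  have hg : ∀ α, fourierT g α = r * f (r * α) := by
    intro α
    rw [fourierT_scale (fun x => (fourierT f x).re) r hr, fourierT_hat f hi hc he h3]
  have hgre : ∀ α, (fourierT g α).re = r * f (r * α) := by
    intro α; rw [hg, ← Complex.ofReal_mul, Complex.ofReal_re]
  have hgi : Integrable g := (integrable_hat f hi hc he h3).comp_div hr.ne'
  have hge : ∀ x, g (-x) = g x := by
    intro x
    simp only [g]
    rw [neg_div, fourierT_even f he]
  have hg0 : g 0 = 1 := by simp [g, h2]
  have hmem : memA1 g := by
    refine ⟨?_, hge, fun x => h3 _, hgi, fun α hα => ?_⟩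
    · exact Complex.continuous_re.comp ((fourierT_cont f hi).comp (by fun_prop))
    · rw [hgre]
      refine mul_nonpos_of_nonneg_of_nonpos hr.le (hle _ ?_)
      rw [abs_mul, abs_of_pos hr]
      nlinarith
  have hval : rho1star g = Ztilde f := by
    rw [rho1star_eq g hgi hge, hZ]
    simp only [hgre, mul_zero, h1]
    have s1 : ∫ a in (0:ℝ)..1, r * f (r * a) * a = (1 / r) * ∫ x in (0:ℝ)..r, f x * x := by
      have := intervalIntegral.integral_comp_mul_left (a := 0) (b := 1) (fun x => f x * x) hr.ne'
      simp only [mul_zero, mul_one, smul_eq_mul] at this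
      rw [one_div, ← this]
      congr 1 with a; ring
    have s2 : ∫ a in (1:ℝ)..(3/2), r * f (r * a) * (3/2 - a) =
        ∫ x in r..(3/2*r), (3/2 * f x - (1 / r) * (f x * x)) := by
      have := intervalIntegral.integral_comp_mul_left (a := 1) (b := 3/2)
        (fun x => (3/2 * f x - (1 / r) * (f x * x))) hr.ne'
      simp only [mul_one, smul_eq_mul] at this
      rw [eq_inv_mul_iff_mul_eq₀ hr.ne', ← intervalIntegral.integral_const_mul] at this
      rw [mul_comm (3/2) r, ← this]
      congr 1 with a
      field_simp
    rw [s1, s2, intervalIntegral.integral_sub (Continuous.intervalIntegrable (by fun_prop) _ _)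
      (Continuous.intervalIntegrable (by fun_prop) _ _), intervalIntegral.integral_const_mul,
      intervalIntegral.integral_const_mul]
    ring
  refine csInf_le ⟨0, ?_⟩ ⟨g, hmem, ?_, by rw [hg0]; exact one_pos, by rw [hg0, hval, div_one]⟩
  · rintro c ⟨g', hg', -, hp, rfl⟩
    exact div_nonneg (rho1star_nonneg g' hg') hp.le
  · intro h
    rw [h] at hg0
    simp at hg0

end
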